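/- Radó's theorem in one variable: let U be an open subset of ℂ and let g : ℂ → ℂ be continuous on U and complex differentiable (holomorphic) at every point of U \ g⁻¹({0}). Then g is holomorphic on all of U. -/

import Mathlib

open Metric Set Complex

lemma rado_max {f h : ℂ → ℂ} {c : ℂ} {R : ℝ} (hf : ContinuousOn f (closedBall c R))
    (hfd : ∀ z ∈ ball c R, f z ≠ 0 → DifferentiableAt ℂ f z)
    (hc : ContinuousOn h (closure {z | z ∈ ball c R ∧ f z ≠ 0}))
    (hd : DifferentiableOn ℂ h {z | z ∈ ball c R ∧ f z ≠ 0}) {M : ℝ} (hM0 : 0 < M)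
    (hM : ∀ z ∈ sphere c R, z ∈ closure {z | z ∈ ball c R ∧ f z ≠ 0} → ‖h z‖ ≤ M) :
    ∀ z ∈ ball c R, f z ≠ 0 → ‖h z‖ ≤ M := by
  intro z hz hfz
  set V := {z | z ∈ ball c R ∧ f z ≠ 0} with hV
  have hVo : IsOpen V := by
    have := (hf.mono ball_subset_closedBall).isOpen_inter_preimage isOpen_ball
      (isOpen_compl_singleton (x := (0:ℂ)))
    exact this
  have hVb : V ⊆ ball c R := fun z hz => hz.1
  have hVc : closure V ⊆ closedBall c R :=
    closure_minimal (hVb.trans ball_subset_closedBall) isClosed_closedBall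
  obtain ⟨B, hB⟩ := (isCompact_closedBall c R).exists_bound_of_continuousOn hf
  have hBf : ‖f z‖ ≤ B := hB z (ball_subset_closedBall hz)
  have hfz' : 0 < ‖f z‖ := norm_pos_iff.2 hfz
  have hB0 : 0 ≤ B := (norm_nonneg _).trans hBf
  have key : ∀ n : ℕ, ‖h z‖ ^ n * ‖f z‖ ≤ M ^ n * B := by
    intro n
    have hdc : DiffContOnCl ℂ (fun z => h z ^ n * f z) V :=
      ⟨(hd.pow n).mul (fun w hw => (hfd w hw.1 hw.2).differentiableWithinAt),
        (hc.pow n).mul (hf.mono hVc)⟩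
    have := Complex.norm_le_of_forall_mem_frontier_norm_le (C := M ^ n * B)
      (isBounded_ball.subset hVb) hdc ?_ (subset_closure ⟨hz, hfz⟩)
    · simpa using this
    intro w hw
    by_cases hw0 : f w = 0
    · simp only [hw0, mul_zero, norm_zero]; positivity
    have hwc : w ∈ closure V := hw.1
    have hwV : w ∉ V := by
      have := hw.2
      rwa [hVo.interior_eq] at this
    have hwb : w ∉ ball c R := fun h => hwV ⟨h, hw0⟩
    have hws : w ∈ sphere c R := by
      have := hVc hwc
      rw [mem_closedBall] at this
      rw [mem_ball, not_lt] at hwb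
      exact le_antisymm this hwb
    rw [norm_mul, norm_pow]
    gcongr
    · exact hM w hws hwc
    · exact hB w (hVc hwc)
  by_contra hlt
  push Not at hlt
  have h1 : 1 < ‖h z‖ / M := (one_lt_div hM0).2 hlt
  obtain ⟨n, hn⟩ := pow_unbounded_of_one_lt (B / ‖f z‖) h1
  rw [div_pow, div_lt_div_iff₀ hfz' (by positivity)] at hn
  linarith [key n]

lemma rado_dense {f : ℂ → ℂ} {a : ℂ} {R : ℝ} (hR : 0 < R) (hf : ContinuousOn f (closedBall a R))
    (hfd : ∀ z ∈ ball a R, f z ≠ 0 → DifferentiableAt ℂ f z)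
    (ha : ∀ᶠ z in nhds a, f z = 0) : ∀ z ∈ ball a R, f z = 0 := by
  intro z hz
  by_contra h0
  have hacl : a ∉ closure {z | z ∈ ball a R ∧ f z ≠ 0} := by
    intro h
    have := mem_closure_iff_frequently.1 h
    exact (this.and_eventually ha).exists.elim fun w hw => hw.1.2 hw.2
  have := rado_max (h := fun z => (z - a)⁻¹) (M := R⁻¹) hf hfd ?_ ?_ (by positivity) ?_ z hz h0
  · have hza : z - a ≠ 0 := by
      intro h
      rw [sub_eq_zero] at h
      exact h0 (h ▸ ha.self_of_nhds)
    rw [norm_inv, inv_le_inv₀ (norm_pos_iff.2 hza) hR] at this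
    rw [mem_ball, dist_eq_norm] at hz
    linarith
  · refine ContinuousOn.inv₀ (by fun_prop) ?_
    intro w hw h
    rw [sub_eq_zero] at h
    exact hacl (h ▸ hw)
  · refine DifferentiableOn.inv (by fun_prop) ?_
    intro w hw h
    rw [sub_eq_zero] at h
    exact absurd (subset_closure hw) (h ▸ hacl)
  · intro w hw _
    rw [norm_inv, mem_sphere_iff_norm.1 hw]

/-- real part bound -/
lemma rado_re {f p : ℂ → ℂ} {c : ℂ} {R ε : ℝ} (hf : ContinuousOn f (closedBall c R))
    (hfd : ∀ z ∈ ball c R, f z ≠ 0 → DifferentiableAt ℂ f z) (hp : Differentiable ℂ p) (a : ℂ)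
    (hM : ∀ z ∈ sphere c R, (a * f z - p z).re ≤ ε) :
    ∀ z ∈ ball c R, f z ≠ 0 → (a * f z - p z).re ≤ ε := by
  intro z hz h0
  have hVc : closure {z | z ∈ ball c R ∧ f z ≠ 0} ⊆ closedBall c R :=
    closure_minimal (fun z hz => ball_subset_closedBall hz.1) isClosed_closedBall
  have hpc := hp.continuous
  have := rado_max (h := fun z => exp (a * f z - p z)) (M := Real.exp ε) hf hfd ?_ ?_
    (by positivity) ?_ z hz h0
  · rw [norm_exp] at this
    exact Real.exp_le_exp.1 this
  · have := hf.mono hVc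
    fun_prop
  · intro w hw
    have h1 := hfd w hw.1 hw.2
    have h2 := hp w
    apply DifferentiableAt.differentiableWithinAt
    fun_prop
  · intro w hw _
    rw [norm_exp]
    exact Real.exp_le_exp.2 (hM w hw)

lemma rado_approx_ball {f p q : ℂ → ℂ} {c : ℂ} {R ε : ℝ} (hf : ContinuousOn f (closedBall c R))
    (hfd : ∀ z ∈ ball c R, f z ≠ 0 → DifferentiableAt ℂ f z) (hp : Differentiable ℂ p)
    (hq : Differentiable ℂ q)
    (hM : ∀ z ∈ sphere c R, ‖f z - (p z + (starRingEnd ℂ) (q z))‖ ≤ ε) :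
    ∀ z ∈ ball c R, f z ≠ 0 → ‖f z - (p z + (starRingEnd ℂ) (q z))‖ ≤ 2 * ε := by
  intro z hz h0
  have e1 := rado_re hf hfd (hp.add hq) 1 (ε := ε) (by
    intro w hw
    refine le_trans ?_ ((re_le_norm _).trans (hM w hw))
    simp) z hz h0
  have e2 := rado_re hf hfd (hp.add hq).neg (-1) (ε := ε) (by
    intro w hw
    refine le_trans ?_ ((neg_le_abs _).trans ((abs_re_le_norm _).trans (hM w hw)))
    simp
    linarith) z hz h0
  have e3 := rado_re hf hfd ((hp.sub hq).const_mul (-I)) (-I) (ε := ε) (by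
    intro w hw
    refine le_trans ?_ ((le_abs_self _).trans ((abs_im_le_norm _).trans (hM w hw)))
    simp
    linarith) z hz h0
  have e4 := rado_re hf hfd ((hp.sub hq).const_mul (I)) (I) (ε := ε) (by
    intro w hw
    refine le_trans ?_ ((neg_le_abs _).trans ((abs_im_le_norm _).trans (hM w hw)))
    simp
    linarith) z hz h0
  simp at e1 e2 e3 e4
  refine (norm_le_abs_re_add_abs_im _).trans ?_
  have : |(f z - (p z + (starRingEnd ℂ) (q z))).re| ≤ ε := by
    rw [abs_le]; simp; constructor <;> linarith
  have : |(f z - (p z + (starRingEnd ℂ) (q z))).im| ≤ ε := by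
    rw [abs_le]; simp; constructor <;> linarith
  linarith

lemma rado_trig {φ : ℂ → ℂ} (hφ : ContinuousOn φ (sphere 0 1)) {ε : ℝ} (hε : 0 < ε) :
    ∃ p q : ℂ → ℂ, Differentiable ℂ p ∧ Differentiable ℂ q ∧
      ∀ z ∈ sphere (0:ℂ) 1, ‖φ z - (p z + (starRingEnd ℂ) (q z))‖ ≤ ε := by
  have : Fact (0 < (1:ℝ)) := ⟨one_pos⟩
  let Φ : C(AddCircle (1:ℝ), ℂ) := ⟨fun x => φ (AddCircle.toCircle x), by
    refine hφ.comp_continuous (continuous_subtype_val.comp AddCircle.continuous_toCircle) ?_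
    intro x
    simpa using Circle.norm_coe (AddCircle.toCircle x)⟩
  have hΦ : Φ ∈ (Submodule.span ℂ (range (@fourier 1))).topologicalClosure := by
    rw [span_fourier_closure_eq_top]; trivial
  obtain ⟨ψ, hψ, hd⟩ := Metric.mem_closure_iff.1 hΦ ε hε
  have hP : ∃ p q : ℂ → ℂ, Differentiable ℂ p ∧ Differentiable ℂ q ∧
      ∀ x : AddCircle (1:ℝ), ψ x = p (AddCircle.toCircle x) +
        (starRingEnd ℂ) (q (AddCircle.toCircle x)) := by
    clear hd hΦ
    induction hψ using Submodule.span_induction with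
    | mem x hx =>
      obtain ⟨n, rfl⟩ := hx
      obtain ⟨m, rfl | rfl⟩ := n.eq_nat_or_neg
      · refine ⟨fun z => z ^ m, fun _ => 0, by fun_prop, by fun_prop, fun x => ?_⟩
        simp [fourier_apply, AddCircle.toCircle_nsmul]
      · refine ⟨fun _ => 0, fun z => z ^ m, by fun_prop, by fun_prop, fun x => ?_⟩
        rw [fourier_neg]
        simp [fourier_apply, AddCircle.toCircle_nsmul]
    | zero => exact ⟨fun _ => 0, fun _ => 0, by fun_prop, by fun_prop, by simp⟩
    | add x y _ _ hx hy =>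
      obtain ⟨p, q, hp, hq, h⟩ := hx
      obtain ⟨p', q', hp', hq', h'⟩ := hy
      refine ⟨fun z => p z + p' z, fun z => q z + q' z, by fun_prop, by fun_prop, fun x => ?_⟩
      simp [h, h']
      ring
    | smul a x _ hx =>
      obtain ⟨p, q, hp, hq, h⟩ := hx
      refine ⟨fun z => a * p z, fun z => (starRingEnd ℂ) a * q z, by fun_prop, by fun_prop,
        fun x => ?_⟩
      simp [h]
      ring
  obtain ⟨p, q, hp, hq, h⟩ := hP
  refine ⟨p, q, hp, hq, fun z hz => ?_⟩
  obtain ⟨x, hx⟩ : ∃ x : AddCircle (1:ℝ), (AddCircle.toCircle x : ℂ) = z := by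
    let w : Circle := ⟨z, by simpa [Submonoid.unitSphere] using hz⟩
    obtain ⟨x, hx⟩ := (AddCircle.homeomorphCircle (one_ne_zero : (1:ℝ) ≠ 0)).surjective w
    refine ⟨x, ?_⟩
    rw [AddCircle.homeomorphCircle_apply] at hx
    rw [hx]
  have := (ContinuousMap.dist_apply_le_dist (f := Φ) (g := ψ) x).trans hd.le
  rw [dist_eq_norm, h, hx] at this
  simpa [Φ, hx] using this

lemma rado_poisson_conj {q : ℂ → ℂ} (hq : Differentiable ℂ q) {w : ℂ} (hw : w ∈ ball (0:ℂ) 1) :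
    Real.circleAverage (poissonKernel 0 w • fun z => (starRingEnd ℂ) (q z)) 0 1
      = (starRingEnd ℂ) (q w) := by
  have h := (hq.diffContOnCl (s := ball (0:ℂ) 1)).circleAverage_poissonKernel_smul hw
  have hk : ContinuousOn (poissonKernel 0 w) (sphere (0:ℂ) |1|) := by
    rw [poissonKernel_eq_re_herglotzRieszKernel]
    exact continuous_re.comp_continuousOn (continuousOn_herglotzRieszKernel_sphere hw)
  have hqc := hq.continuous
  have hi : CircleIntegrable (poissonKernel 0 w • q) 0 1 :=
    ContinuousOn.circleIntegrable' (hk.smul hqc.continuousOn)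
  have := (conjCLE : ℂ →L[ℝ] ℂ).circleAverage_comp_comm hi
  rw [h] at this
  simp only [ContinuousLinearEquiv.coe_coe, conjCLE_apply] at this
  rw [← this]
  congr 1
  ext z
  simp

lemma rado_poisson_est {φ : ℂ → ℂ} {w : ℂ} (hw : w ∈ ball (0:ℂ) 1) {ε : ℝ}
    (hε : ∀ z ∈ sphere (0:ℂ) 1, ‖φ z‖ ≤ ε) :
    ‖Real.circleAverage (poissonKernel 0 w • φ) 0 1‖ ≤ (1 + ‖w‖) / (1 - ‖w‖) * ε := by
  have hw1 : ‖w‖ < 1 := by simpa using hw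
  rw [Real.circleAverage_def, norm_smul]
  have := intervalIntegral.norm_integral_le_of_norm_le_const (a := 0) (b := 2 * Real.pi)
    (f := fun θ => (poissonKernel 0 w • φ) (circleMap 0 1 θ))
    (C := (1 + ‖w‖) / (1 - ‖w‖) * ε) ?_
  · have hpi := Real.pi_pos
    have h2 : ‖(2 * Real.pi)⁻¹‖ = (2 * Real.pi)⁻¹ := Real.norm_of_nonneg (by positivity)
    rw [h2]
    calc _ ≤ (2 * Real.pi)⁻¹ * ((1 + ‖w‖) / (1 - ‖w‖) * ε * |2 * Real.pi - 0|) := by gcongr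
      _ = _ := by
        rw [sub_zero, abs_of_pos (by positivity)]
        field_simp
  intro θ _
  have hs : circleMap 0 1 θ ∈ sphere (0:ℂ) 1 := circleMap_mem_sphere _ zero_le_one _
  have h1 := re_herglotzRieszKernel_le hs hw
  have h2 := le_re_herglotzRieszKernel hs hw
  have h3 := hε _ hs
  rw [poissonKernel_eq_re_herglotzRieszKernel, Pi.smul_apply', norm_smul, Function.comp_apply,
    herglotzRieszKernel_def]
  have h4 : 0 ≤ (1 - ‖w‖) / (1 + ‖w‖) := div_nonneg (by linarith) (by positivity)
  simp only [sub_zero] at h1 h2 ⊢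
  rw [Real.norm_of_nonneg (h4.trans h2)]
  have : 0 ≤ (1 + ‖w‖) / (1 - ‖w‖) := div_nonneg (by positivity) (by linarith)
  gcongr

/-- On the nonvanishing set, `f` is its own Poisson integral. -/
lemma rado_poisson {f : ℂ → ℂ} (hf : ContinuousOn f (closedBall 0 1))
    (hfd : ∀ z ∈ ball (0:ℂ) 1, f z ≠ 0 → DifferentiableAt ℂ f z) {w : ℂ} (hw : w ∈ ball (0:ℂ) 1)
    (h0 : f w ≠ 0) :
    Real.circleAverage (poissonKernel 0 w • f) 0 1 = f w := by
  have hk : ContinuousOn (poissonKernel 0 w) (sphere (0:ℂ) |1|) := by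
    rw [poissonKernel_eq_re_herglotzRieszKernel]
    exact continuous_re.comp_continuousOn (continuousOn_herglotzRieszKernel_sphere hw)
  have hw1 : ‖w‖ < 1 := by simpa using hw
  set K := (1 + ‖w‖) / (1 - ‖w‖)
  have hK : 0 ≤ K := div_nonneg (by positivity) (by linarith)
  have hfs : ContinuousOn f (sphere 0 |1|) := by
    rw [abs_one]; exact hf.mono sphere_subset_closedBall
  rw [← sub_eq_zero, ← norm_le_zero_iff]
  refine le_of_forall_pos_le_add fun ε hε => ?_
  obtain ⟨p, q, hp, hq, h⟩ := rado_trig (hf.mono sphere_subset_closedBall)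
    (ε := ε / (K + 2)) (by positivity)
  have hpc := hp.continuous
  have hqc := hq.continuous
  have e1 := rado_approx_ball hf hfd hp hq h w hw h0
  have e2 := rado_poisson_est hw h
  have i1 : CircleIntegrable (poissonKernel 0 w • f) 0 1 :=
    ContinuousOn.circleIntegrable' (hk.smul hfs)
  have i2 : CircleIntegrable (poissonKernel 0 w • p) 0 1 :=
    ContinuousOn.circleIntegrable' (hk.smul hpc.continuousOn)
  have i3 : CircleIntegrable (poissonKernel 0 w • fun z => (starRingEnd ℂ) (q z)) 0 1 :=
    ContinuousOn.circleIntegrable' (hk.smul (continuous_conj.comp hqc).continuousOn)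
  have e3 : (poissonKernel 0 w • fun z => f z - (p z + (starRingEnd ℂ) (q z))) =
      poissonKernel 0 w • f - (poissonKernel 0 w • p +
        poissonKernel 0 w • fun z => (starRingEnd ℂ) (q z)) := by
    ext z
    simp only [Pi.smul_apply', Pi.sub_apply, Pi.add_apply, smul_sub, smul_add]
  rw [e3, Real.circleAverage_sub i1 (i2.add i3), Real.circleAverage_add i2 i3,
    rado_poisson_conj hq hw,
    (hp.diffContOnCl (s := ball (0:ℂ) 1)).circleAverage_poissonKernel_smul hw] at e2
  calc _ = ‖(Real.circleAverage (poissonKernel 0 w • f) 0 1 - (p w + (starRingEnd ℂ) (q w))) -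
        (f w - (p w + (starRingEnd ℂ) (q w)))‖ := by congr 1; ring
    _ ≤ K * (ε / (K + 2)) + 2 * (ε / (K + 2)) := (norm_sub_le _ _).trans (add_le_add e2 e1)
    _ = 0 + ε := by field_simp; ring

/-- Poisson integrals are sums of holomorphic and antiholomorphic functions. -/
lemma rado_decomp {f : ℂ → ℂ} (hf : ContinuousOn f (closedBall 0 1)) :
    ∃ A B : ℂ → ℂ, DifferentiableOn ℂ A (ball 0 1) ∧ DifferentiableOn ℂ B (ball 0 1) ∧
      ∀ w ∈ ball (0:ℂ) 1, Real.circleAverage (poissonKernel 0 w • f) 0 1 =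
        A w + (starRingEnd ℂ) (B w) := by
  have hfs : ContinuousOn f (sphere 0 |1|) := by
    rw [abs_one]; exact hf.mono sphere_subset_closedBall
  have hfs' : ContinuousOn (fun z => (starRingEnd ℂ) (f z)) (sphere 0 |1|) :=
    continuous_conj.comp_continuousOn hfs
  have d1 := differentiableOn_circleAverage_herglotzRieszKernel_smul
    (ContinuousOn.circleIntegrable' hfs)
  have d2 := differentiableOn_circleAverage_herglotzRieszKernel_smul
    (ContinuousOn.circleIntegrable' hfs')
  refine ⟨_, _, d1.const_mul (1/2), d2.const_mul (1/2), fun w hw => ?_⟩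
  have hk := continuousOn_herglotzRieszKernel_sphere hw
  have i1 := ContinuousOn.circleIntegrable' (hk.smul hfs)
  have i2 := ContinuousOn.circleIntegrable' (hk.smul hfs')
  have i3 := ContinuousOn.circleIntegrable' (continuous_conj.comp_continuousOn (hk.smul hfs'))
  have := (conjCLE : ℂ →L[ℝ] ℂ).circleAverage_comp_comm i2
  simp only [ContinuousLinearEquiv.coe_coe, conjCLE_apply] at this
  have h2 : (starRingEnd ℂ) (1/2) = 1/2 := by rw [map_div₀, map_one, map_ofNat]
  rw [map_mul, h2]
  erw [← this]
  rw [← mul_add]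
  erw [← Real.circleAverage_fun_add i1 i3]
  rw [← smul_eq_mul, ← Real.circleAverage_fun_smul]
  congr 1
  ext1 z
  have := add_conj (herglotzRieszKernel 0 w z)
  simp only [poissonKernel_eq_re_herglotzRieszKernel, Pi.smul_apply', Function.comp_apply,
    real_smul, smul_eq_mul, Pi.mul_apply, map_mul, conj_conj]
  push_cast at this
  linear_combination (-1/2 * f z) * this

lemma rado_disc {f : ℂ → ℂ} (hf : ContinuousOn f (closedBall 0 1))
    (hfd : ∀ z ∈ ball (0:ℂ) 1, f z ≠ 0 → DifferentiableAt ℂ f z)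
    (hdense : ∀ z ∈ ball (0:ℂ) 1, ∃ᶠ w in nhds z, f w ≠ 0) :
    DifferentiableOn ℂ f (ball 0 1) := by
  obtain ⟨A, B, hA, hB, h⟩ := rado_decomp hf
  have hAc := hA.continuousOn
  have hBc := hB.continuousOn
  have hball : ∀ z ∈ ball (0:ℂ) 1, ball (0:ℂ) 1 ∈ nhds z := fun z hz => isOpen_ball.mem_nhds hz
  have heq0 : ∀ w ∈ ball (0:ℂ) 1, f w ≠ 0 → f w = A w + (starRingEnd ℂ) (B w) := by
    intro w hw h0
    rw [← h w hw, rado_poisson hf hfd hw h0]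
  have heq : ∀ w ∈ ball (0:ℂ) 1, f w = A w + (starRingEnd ℂ) (B w) := by
    intro w hw
    have c1 : ContinuousAt f w := (hf.mono ball_subset_closedBall).continuousAt (hball w hw)
    have c2 : ContinuousAt (fun w => A w + (starRingEnd ℂ) (B w)) w :=
      (hAc.add (continuous_conj.comp_continuousOn hBc)).continuousAt (hball w hw)
    refine tendsto_nhds_unique_of_frequently_eq c1 c2 ?_
    refine ((hdense w hw).and_eventually (hball w hw)).mono ?_
    rintro x ⟨hx, hxb⟩
    exact heq0 x hxb hx
  have hBd0 : ∀ w ∈ ball (0:ℂ) 1, f w ≠ 0 → deriv B w = 0 := by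
    intro w hw h0
    have hBw := (hB.differentiableAt (hball w hw)).hasDerivAt
    have hG : DifferentiableAt ℂ (fun z => f z - A z) w :=
      (hfd w hw h0).sub (hA.differentiableAt (hball w hw))
    have hG' : HasDerivAt (fun z => (starRingEnd ℂ) (B z)) (deriv (fun z => f z - A z) w) w := by
      refine hG.hasDerivAt.congr_of_eventuallyEq ?_
      filter_upwards [hball w hw] with z hz
      rw [heq z hz]; ring
    have k1 := hG'.hasFDerivAt.restrictScalars ℝ
    have k2 := (conjCLE : ℂ →L[ℝ] ℂ).hasFDerivAt.comp w (hBw.hasFDerivAt.restrictScalars ℝ)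
    have k3 := k1.unique k2
    have k4 := congrArg (fun L : ℂ →L[ℝ] ℂ => L 1) k3
    have k5 := congrArg (fun L : ℂ →L[ℝ] ℂ => L I) k3
    simp at k4 k5
    rw [k4] at k5
    have k6 : I * (starRingEnd ℂ) (deriv B w) = 0 := by linear_combination k5 / 2
    simpa using k6
  have hBd : ∀ w ∈ ball (0:ℂ) 1, deriv B w = 0 := by
    intro w hw
    have c1 : ContinuousAt (deriv B) w :=
      (hB.deriv isOpen_ball).continuousOn.continuousAt (hball w hw)
    refine tendsto_nhds_unique_of_frequently_eq c1 (continuousAt_const (y := (0:ℂ))) ?_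
    refine ((hdense w hw).and_eventually (hball w hw)).mono ?_
    rintro x ⟨hx, hxb⟩
    exact hBd0 x hxb hx
  have hBconst : ∀ w ∈ ball (0:ℂ) 1, B w = B 0 := by
    intro w hw
    exact isOpen_ball.is_const_of_deriv_eq_zero (convex_ball (0:ℂ) 1).isPreconnected hB
      (fun x hx => hBd x hx) hw (mem_ball_self one_pos)
  refine (hA.add_const ((starRingEnd ℂ) (B 0))).congr ?_
  intro w hw
  rw [heq w hw, hBconst w hw]

/-- Radó's theorem in one variable: if `g` is continuous on an open set `U ⊆ ℂ`
and holomorphic at every point of `U` outside the zero set of `g`, then `g` is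
holomorphic on all of `U`. -/
theorem rado_one_variable (U : Set ℂ) (hU : IsOpen U) (g : ℂ → ℂ)
    (hcont : ContinuousOn g U)
    (hdiff : ∀ z ∈ U \ g ⁻¹' {0}, DifferentiableAt ℂ g z) :
    ∀ z ∈ U, DifferentiableAt ℂ g z := by
  intro z₀ hz₀
  by_cases hint : ∀ᶠ z in nhds z₀, g z = 0
  · exact (differentiableAt_const (0:ℂ)).congr_of_eventuallyEq hint
  have hdiff' : ∀ z ∈ U, g z ≠ 0 → DifferentiableAt ℂ g z := fun z hz h0 => hdiff z ⟨hz, h0⟩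
  obtain ⟨r, hr, hrU⟩ := Metric.nhds_basis_closedBall.mem_iff.1 (hU.mem_nhds hz₀)
  obtain ⟨R, rfl⟩ : ∃ R, r = 2 * R := ⟨r / 2, by ring⟩
  have hR : 0 < R := by linarith
  have hdense : ∀ z ∈ ball z₀ R, ∃ᶠ w in nhds z, g w ≠ 0 := by
    intro z hz hev
    simp only [not_not] at hev
    have hz' : dist z z₀ < R := hz
    have hsub : closedBall z R ⊆ U := (closedBall_subset_closedBall' (by linarith)).trans hrU
    have := rado_dense hR (hcont.mono hsub)
      (fun x hx h0 => hdiff' x (hsub (ball_subset_closedBall hx)) h0) hev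
    exact hint (Filter.mem_of_superset (isOpen_ball.mem_nhds (mem_ball_comm.1 hz)) this)
  have hRc : (R:ℂ) ≠ 0 := by exact_mod_cast hR.ne'
  let T : ℂ → ℂ := fun z => z₀ + R * z
  have hTc : Continuous T := by fun_prop
  have hTd : ∀ z, dist (T z) z₀ = R * ‖z‖ := by
    intro z
    simp [T, dist_eq_norm, abs_of_pos hR]
  have hTb : ∀ z ∈ ball (0:ℂ) 1, T z ∈ ball z₀ R := by
    intro z hz
    have : ‖z‖ < 1 := by simpa using hz
    rw [mem_ball, hTd]
    nlinarith
  have hTU : ∀ z ∈ closedBall (0:ℂ) 1, T z ∈ U := by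
    intro z hz
    have : ‖z‖ ≤ 1 := by simpa using hz
    refine hrU ?_
    rw [mem_closedBall, hTd]
    nlinarith
  have hTdiff : Differentiable ℂ T := by fun_prop
  have key := rado_disc (f := fun z => g (T z)) (hcont.comp hTc.continuousOn hTU)
    (fun z hz h0 => (hdiff' _ (hTU z (ball_subset_closedBall hz)) h0).comp z (hTdiff z)) ?_
  · have k1 : DifferentiableAt ℂ (fun z => g (T z)) 0 :=
      key.differentiableAt (isOpen_ball.mem_nhds (mem_ball_self one_pos))
    have k2 : DifferentiableAt ℂ (fun z => (z - z₀) / (R:ℂ)) z₀ := by fun_prop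
    have k3 : DifferentiableAt ℂ (fun z => g (T z)) ((z₀ - z₀) / (R:ℂ)) := by simpa using k1
    have k4 := k3.comp z₀ k2
    refine k4.congr_of_eventuallyEq (Filter.Eventually.of_forall fun z => ?_)
    simp only [Function.comp_apply, T]
    congr 1
    field_simp
    ring
  · intro z hz hev
    simp only [not_not] at hev
    refine hdense (T z) (hTb z hz) ?_
    simp only [not_not]
    have k2 : Filter.Tendsto (fun x => (x - z₀) / (R:ℂ)) (nhds (T z)) (nhds z) := by
      have : ContinuousAt (fun x => (x - z₀) / (R:ℂ)) (T z) := by fun_prop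
      have e : (T z - z₀) / (R:ℂ) = z := by simp [T]; field_simp
      rw [ContinuousAt, e] at this
      exact this
    filter_upwards [k2.eventually hev] with x hx
    rw [← hx]
    congr 1
    simp only [T]
    field_simp
    ring
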